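/- Let 𝕄 = 𝕄* be a bounded self-adjoint operator on a Hilbert space H = H₁ ⊕ H₂ with block decomposition 𝕄^{(αβ)} (α,β ∈ {1,2}), and suppose 𝕄^{(11)} ≤ m₁ and 𝕄^{(22)} ≤ m₂ with m₂ < m₁ (as quadratic-form inequalities). Then the top of the spectrum of 𝕄 satisfies λ_max(𝕄) ≤ m₁ + ‖𝕄^{(12)}‖² / |m₂ − m₁|. -/

import Mathlib

open scoped InnerProductSpace

/-!
Split `x = u + v` along `P₁` and `P₂`. The diagonal blocks contribute at most `m₁‖u‖² + m₂‖v‖²` to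
`re ⟪M x, x⟫`, and the coupling of `u` and `v` contributes at most `2N‖u‖‖v‖`, where `N` is half the
norm of the off-diagonal block of `M + M†`. Since `m₂ < m₁`, completing the square absorbs the
coupling into the gap `(m₁ - m₂)‖v‖²` at the cost of `N² / (m₁ - m₂) * ‖u‖²`. A bound on the
quadratic form passes to the spectrum because `μ - M` is coercive as soon as `re μ` exceeds it.
-/

theorem quadratic_form_le_of_gap {m₁ m₂ : ℝ} (hm : m₂ < m₁) (N s t : ℝ) :
    m₁ * s ^ 2 + m₂ * t ^ 2 + 2 * N * s * t ≤ (m₁ + N ^ 2 / (m₁ - m₂)) * (s ^ 2 + t ^ 2) := by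
  have gap_pos : 0 < m₁ - m₂ := sub_pos.2 hm
  have deficit_eq : (m₁ + N ^ 2 / (m₁ - m₂)) * (s ^ 2 + t ^ 2)
      - (m₁ * s ^ 2 + m₂ * t ^ 2 + 2 * N * s * t)
      = ((N * s - (m₁ - m₂) * t) ^ 2 + (N * t) ^ 2) / (m₁ - m₂) := by
    field_simp
    ring
  rw [← sub_nonneg, deficit_eq]
  positivity

section InnerProductSpace

variable {𝕜 E : Type*} [RCLike 𝕜] [NormedAddCommGroup E] [InnerProductSpace 𝕜 E]

theorem re_inner_map_add_self_le_of_gap {F : Type*} [FunLike F E E] [AddMonoidHomClass F E E]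
    (T : F) {u v : E} {m₁ m₂ N : ℝ} (hm : m₂ < m₁) (huv : ⟪u, v⟫_𝕜 = 0)
    (hu : RCLike.re ⟪T u, u⟫_𝕜 ≤ m₁ * ‖u‖ ^ 2)
    (hv : RCLike.re ⟪T v, v⟫_𝕜 ≤ m₂ * ‖v‖ ^ 2)
    (hcoupling : RCLike.re ⟪T u, v⟫_𝕜 + RCLike.re ⟪T v, u⟫_𝕜 ≤ 2 * N * ‖u‖ * ‖v‖) :
    RCLike.re ⟪T (u + v), u + v⟫_𝕜 ≤ (m₁ + N ^ 2 / (m₁ - m₂)) * ‖u + v‖ ^ 2 := by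
  have pythagoras : ‖u + v‖ ^ 2 = ‖u‖ ^ 2 + ‖v‖ ^ 2 := by
    simpa only [sq] using norm_add_sq_eq_norm_sq_add_norm_sq_of_inner_eq_zero u v huv
  calc RCLike.re ⟪T (u + v), u + v⟫_𝕜
      = RCLike.re ⟪T u, u⟫_𝕜 + RCLike.re ⟪T v, v⟫_𝕜
        + (RCLike.re ⟪T u, v⟫_𝕜 + RCLike.re ⟪T v, u⟫_𝕜) := by
        simp only [map_add, inner_add_left, inner_add_right]
        ring
    _ ≤ m₁ * ‖u‖ ^ 2 + m₂ * ‖v‖ ^ 2 + 2 * N * ‖u‖ * ‖v‖ := by gcongr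
    _ ≤ (m₁ + N ^ 2 / (m₁ - m₂)) * ‖u + v‖ ^ 2 := by
        rw [pythagoras]
        exact quadratic_form_le_of_gap hm N ‖u‖ ‖v‖

open scoped InnerProduct

variable [CompleteSpace E]

theorem re_inner_add_re_inner_le_norm_block (T : E →L[𝕜] E) {P Q : E →L[𝕜] E}
    (hP : IsSelfAdjoint P) {u v : E} (hu : P u = u) (hv : Q v = v) :
    RCLike.re ⟪T u, v⟫_𝕜 + RCLike.re ⟪T v, u⟫_𝕜 ≤ ‖P ∘L (T + T†) ∘L Q‖ * ‖u‖ * ‖v‖ := by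
  have block_inner : ⟪(P ∘L (T + T†) ∘L Q) v, u⟫_𝕜 = ⟪T v, u⟫_𝕜 + ⟪v, T u⟫_𝕜 := by
    calc ⟪(P ∘L (T + T†) ∘L Q) v, u⟫_𝕜
        = ⟪P ((T + T†) v), u⟫_𝕜 := by simp only [ContinuousLinearMap.comp_apply, hv]
      _ = ⟪(T + T†) v, u⟫_𝕜 := by rw [hP.isSymmetric.apply_clm, hu]
      _ = ⟪T v, u⟫_𝕜 + ⟪v, T u⟫_𝕜 := by
        rw [add_apply, inner_add_left, ContinuousLinearMap.adjoint_inner_left]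
  calc RCLike.re ⟪T u, v⟫_𝕜 + RCLike.re ⟪T v, u⟫_𝕜
      = RCLike.re ⟪(P ∘L (T + T†) ∘L Q) v, u⟫_𝕜 := by
        rw [block_inner, map_add, inner_re_symm v, add_comm]
    _ ≤ ‖(P ∘L (T + T†) ∘L Q) v‖ * ‖u‖ := re_inner_le_norm _ _
    _ ≤ ‖P ∘L (T + T†) ∘L Q‖ * ‖v‖ * ‖u‖ := by
        gcongr
        exact ContinuousLinearMap.le_opNorm _ _
    _ = ‖P ∘L (T + T†) ∘L Q‖ * ‖u‖ * ‖v‖ := mul_right_comm _ _ _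

theorem norm_block_add_adjoint_div_two {F G : Type*} [NormedAddCommGroup F] [NormedSpace 𝕜 F]
    [NormedAddCommGroup G] [NormedSpace 𝕜 G] {T : E →L[𝕜] E} (hT : IsSelfAdjoint T)
    (A : E →L[𝕜] F) (B : G →L[𝕜] E) :
    ‖A ∘L (T + T†) ∘L B‖ / 2 = ‖A ∘L T ∘L B‖ := by
  rw [hT.adjoint_eq, ← two_smul 𝕜 T, ContinuousLinearMap.smul_comp, ContinuousLinearMap.comp_smul,
    norm_smul, RCLike.norm_two, mul_div_cancel_left₀ _ two_ne_zero]

theorem re_le_of_mem_spectrum_of_re_inner_map_self_le {T : E →L[𝕜] E} {C : ℝ}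
    (hT : ∀ x, RCLike.re ⟪T x, x⟫_𝕜 ≤ C * ‖x‖ ^ 2) {μ : 𝕜} (hμ : μ ∈ spectrum 𝕜 T) :
    RCLike.re μ ≤ C := by
  by_contra! hC
  refine hμ (ContinuousLinearMap.isUnit_of_forall_le_norm_inner_map _
    (c := (RCLike.re μ - C).toNNReal) (Real.toNNReal_pos.2 (sub_pos.2 hC)) fun x ↦ ?_)
  rw [Real.coe_toNNReal _ (sub_pos.2 hC).le]
  calc ‖x‖ ^ 2 * (RCLike.re μ - C)
      ≤ RCLike.re μ * ‖x‖ ^ 2 - RCLike.re ⟪T x, x⟫_𝕜 := by linarith [hT x]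
    _ = RCLike.re ⟪(algebraMap 𝕜 (E →L[𝕜] E) μ - T) x, x⟫_𝕜 := by
        have re_inner_smul : RCLike.re ⟪μ • x, x⟫_𝕜 = RCLike.re μ * ‖x‖ ^ 2 := by
          rw [inner_smul_left, inner_self_eq_norm_sq_to_K, ← RCLike.ofReal_pow,
            RCLike.re_mul_ofReal, RCLike.conj_re]
        rw [sub_apply, Algebra.algebraMap_eq_smul_one, inner_sub_left, map_sub,
          smul_apply, one_apply_eq_self, re_inner_smul]
    _ ≤ ‖⟪(algebraMap 𝕜 (E →L[𝕜] E) μ - T) x, x⟫_𝕜‖ := RCLike.re_le_norm _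

theorem block_operator_spectrum_bound_general (M : E →L[𝕜] E) {P₁ P₂ : E →L[𝕜] E}
    (hP₁ : IsStarProjection P₁) (hPsum : P₁ + P₂ = 1) {m₁ m₂ : ℝ} (hm : m₂ < m₁)
    (h11 : ∀ x : E, P₁ x = x → RCLike.re ⟪M x, x⟫_𝕜 ≤ m₁ * ‖x‖ ^ 2)
    (h22 : ∀ x : E, P₂ x = x → RCLike.re ⟪M x, x⟫_𝕜 ≤ m₂ * ‖x‖ ^ 2) :
    ∀ μ ∈ spectrum 𝕜 M,
      RCLike.re μ ≤ m₁ + (‖P₁ ∘L (M + M†) ∘L P₂‖ / 2) ^ 2 / |m₂ - m₁| := by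
  intro μ hμ
  obtain rfl : P₂ = 1 - P₁ := eq_sub_of_add_eq' hPsum
  rw [abs_of_neg (sub_neg.2 hm), neg_sub]
  refine re_le_of_mem_spectrum_of_re_inner_map_self_le (fun x ↦ ?_) hμ
  have hu : P₁ (P₁ x) = P₁ x := DFunLike.congr_fun hP₁.isIdempotentElem x
  have hv : (1 - P₁) ((1 - P₁) x) = (1 - P₁) x :=
    DFunLike.congr_fun hP₁.one_sub.isIdempotentElem x
  have annihilates : P₁ ((1 - P₁) x) = 0 :=
    DFunLike.congr_fun hP₁.isIdempotentElem.mul_one_sub_self x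
  have orthogonal : ⟪P₁ x, (1 - P₁) x⟫_𝕜 = 0 := by
    rw [hP₁.isSelfAdjoint.isSymmetric.apply_clm, annihilates, inner_zero_right]
  have coupling := re_inner_add_re_inner_le_norm_block M hP₁.isSelfAdjoint hu hv
  have decomposition : P₁ x + (1 - P₁) x = x := DFunLike.congr_fun hPsum x
  rw [← mul_div_cancel₀ ‖_‖ (two_ne_zero' ℝ)] at coupling
  simpa only [decomposition] using
    re_inner_map_add_self_le_of_gap M hm orthogonal (h11 _ hu) (h22 _ hv) coupling

end InnerProductSpace

/-- Proposition 4.2 of the paper: let `𝕄 = 𝕄*` be a bounded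
self-adjoint operator on a Hilbert space `H = H₁ ⊕ H₂` (the decomposition given
by complementary orthogonal projections `P₁, P₂`), with blocks
`𝕄^{(αβ)} = P_α 𝕄 P_β`. If `𝕄^{(11)} ≤ m₁` and `𝕄^{(22)} ≤ m₂` as quadratic
forms with `m₂ < m₁`, then the top of the spectrum of `𝕄` satisfies
`λ_max(𝕄) ≤ m₁ + ‖𝕄^{(12)}‖² / |m₂ - m₁|`. -/
theorem block_operator_spectrum_bound
    {H : Type*} [NormedAddCommGroup H] [InnerProductSpace ℂ H] [CompleteSpace H]
    (M : H →L[ℂ] H) (hM : IsSelfAdjoint M)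
    (P₁ P₂ : H →L[ℂ] H)
    (hP₁proj : P₁ ∘L P₁ = P₁) (hP₂proj : P₂ ∘L P₂ = P₂)
    (hP₁sa : IsSelfAdjoint P₁) (hP₂sa : IsSelfAdjoint P₂)
    (hPsum : P₁ + P₂ = 1)
    (m₁ m₂ : ℝ) (hm : m₂ < m₁)
    (h11 : ∀ x : H, P₁ x = x → (⟪M x, x⟫_ℂ).re ≤ m₁ * ‖x‖ ^ 2)
    (h22 : ∀ x : H, P₂ x = x → (⟪M x, x⟫_ℂ).re ≤ m₂ * ‖x‖ ^ 2) :
    ∀ μ ∈ spectrum ℂ M, μ.re ≤ m₁ + ‖P₁ ∘L M ∘L P₂‖ ^ 2 / |m₂ - m₁| := by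
  exact norm_block_add_adjoint_div_two hM P₁ P₂ ▸
    block_operator_spectrum_bound_general M ⟨hP₁proj, hP₁sa⟩ hPsum hm h11 h22
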